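/- For every dimension N ≥ 1, every degree k ∈ ℕ, every δ > 0, all exponents p, q ∈ [1, +∞], and all integers m ≥ r ≥ 0, there exists a constant M > 0 depending only on N, k, δ, p, q, m and r such that: for every open bounded set U ⊆ ℝ^N of positive Lebesgue measure |U| and diameter h_U > 0 satisfying the δ-ball condition, and every polynomial w : ℝ^N → ℝ of total degree at most k, the reverse Sobolev embedding |w|_{W^{m,p}(U)} ≤ M · h_U^{r−m} · |U|^{1/p − 1/q} · |w|_{W^{r,q}(U)} holds. -/

import Mathlib

open MeasureTheory Metric
open scoped ENNReal

noncomputable section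

/-- `w : ℝ^N → ℝ` is (given by) a multivariate polynomial of total degree at most `k`. -/
def IsPolyDegLE (N k : ℕ) (w : EuclideanSpace ℝ (Fin N) → ℝ) : Prop :=
  ∃ P : MvPolynomial (Fin N) ℝ, P.totalDegree ≤ k ∧ ∀ x, w x = MvPolynomial.eval (fun i => x i) P

/-- The `W^{m,p}(U)`-seminorm of `v`: the `L^p(U)`-norm of the norm of the `m`-th iterated
derivative. -/
def sobSemi {N : ℕ} (m : ℕ) (p : ℝ≥0∞) (U : Set (EuclideanSpace ℝ (Fin N)))
    (v : EuclideanSpace ℝ (Fin N) → ℝ) : ℝ≥0∞ :=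
  eLpNorm (fun x => ‖iteratedFDeriv ℝ m v x‖) p (volume.restrict U)

/-!
The inequality holds for every finite-dimensional space `V` of analytic functions that is stable
under translations and dilations. If `D^r v` vanishes on a ball, it vanishes identically by
analyticity, and so does `D^m v` for `m ≥ r`. As `V` is finite-dimensional, this inclusion of
kernels is a quantitative bound: on the unit ball, `‖D^m v‖` is at most a constant times the average
of `‖D^r v‖` over the concentric ball of radius `δ`. Dilating to a ball of radius `h` produces the
factor `h^(r-m)`, and the `δ`-ball condition lets `U` replace the small ball at the cost of a factor
`δ^(-dim)`. Hölder's inequality passes from averages to `L^q` norms when `q ≥ 1`; when `q < 1`, the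
pointwise bound `|f| ≤ ‖f‖_∞^(1-q) |f|^q` turns `‖f‖_∞ ≤ C ⨍ |f|` into a bound by the `L^q` norm.
-/

open scoped NNReal

section LpAverages

variable {α : Type*} {mα : MeasurableSpace α} {μ : Measure α}

lemma setLAverage_le_mul_setLAverage {s t : Set α} (hst : s ⊆ t) {c : ℝ≥0}
    (hμ : μ t ≤ c * μ s) (f : α → ℝ≥0∞) :
    ⨍⁻ x in s, f x ∂μ ≤ c * ⨍⁻ x in t, f x ∂μ := by
  obtain hs | hs := eq_or_ne (μ s) 0
  · simp [setLAverage_eq, Measure.restrict_eq_zero.2 hs]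
  have inv_le : (μ s)⁻¹ ≤ c * (μ t)⁻¹ := by
    rw [← div_eq_mul_inv, ENNReal.le_div_iff_mul_le
      (.inl ((pos_iff_ne_zero.2 hs).trans_le (measure_mono hst)).ne') (.inr ENNReal.coe_ne_top)]
    calc (μ s)⁻¹ * μ t ≤ (μ s)⁻¹ * (c * μ s) := by gcongr
      _ = c * ((μ s)⁻¹ * μ s) := mul_left_comm _ _ _
      _ ≤ c := mul_le_of_le_one_right' (ENNReal.inv_mul_le_one _)
  calc ⨍⁻ x in s, f x ∂μ = (∫⁻ x in s, f x ∂μ) * (μ s)⁻¹ := setLAverage_eq ..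
    _ ≤ (∫⁻ x in t, f x ∂μ) * (c * (μ t)⁻¹) := by gcongr
    _ = c * ⨍⁻ x in t, f x ∂μ := by rw [setLAverage_eq, div_eq_mul_inv, mul_left_comm]

lemma setLAverage_comp_of_map_eq_smul {β : Type*} {mβ : MeasurableSpace β} {ν : Measure β}
    {g : α → β} (hg : MeasurableEmbedding g) {c : ℝ≥0∞} (hc₀ : c ≠ 0) (hc : c ≠ ∞)
    (hmap : μ.map g = c • ν) (s : Set α) (f : β → ℝ≥0∞) :
    ⨍⁻ x in s, f (g x) ∂μ = ⨍⁻ y in g '' s, f y ∂ν := by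
  have setLIntegral_comp (f : β → ℝ≥0∞) : ∫⁻ x in s, f (g x) ∂μ = c * ∫⁻ y in g '' s, f y ∂ν := by
    rw [MeasurePreserving.setLIntegral_comp_emb ⟨hg.measurable, hmap⟩ hg, Measure.restrict_smul,
      lintegral_smul_measure, smul_eq_mul]
  have measure_eq : μ s = c * ν (g '' s) := by simpa using setLIntegral_comp 1
  rw [setLAverage_eq, setLAverage_eq, setLIntegral_comp, measure_eq,
    ENNReal.mul_div_mul_left _ _ hc₀ hc]

variable {E : Type*} [NormedAddCommGroup E] {f : α → E} {p : ℝ≥0∞}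

lemma laverage_enorm_le_rpow_mul_eLpNorm [IsFiniteMeasure μ] (hp : 1 ≤ p)
    (hf : AEStronglyMeasurable f μ) :
    ⨍⁻ x, ‖f x‖ₑ ∂μ ≤ μ Set.univ ^ (-(p⁻¹).toReal) * eLpNorm f p μ := by
  obtain rfl | hμ := eq_or_ne μ 0
  · simp
  have hμ₀ : μ Set.univ ≠ 0 := by simpa using hμ
  calc ⨍⁻ x, ‖f x‖ₑ ∂μ = eLpNorm f 1 μ * μ Set.univ ^ (-1 : ℝ) := by
        rw [laverage_eq, eLpNorm_one_eq_lintegral_enorm, ENNReal.rpow_neg_one, div_eq_mul_inv]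
    _ ≤ eLpNorm f p μ * μ Set.univ ^ (1 / (1 : ℝ≥0∞).toReal - 1 / p.toReal)
          * μ Set.univ ^ (-1 : ℝ) := by
        gcongr; exact eLpNorm_le_eLpNorm_mul_rpow_measure_univ hp hf
    _ = μ Set.univ ^ (-(p⁻¹).toReal) * eLpNorm f p μ := by
        rw [mul_assoc, ← ENNReal.rpow_add _ _ hμ₀ (measure_ne_top μ _), mul_comm]
        congr 2
        rw [ENNReal.toReal_one, one_div_one, one_div, ENNReal.toReal_inv]
        ring

lemma lintegral_enorm_le_eLpNorm_top_rpow_mul {s : ℝ} (hs₀ : 0 ≤ s) (hs : s ≤ 1)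
    (hf : eLpNorm f ∞ μ ≠ ∞) :
    ∫⁻ x, ‖f x‖ₑ ∂μ ≤ eLpNorm f ∞ μ ^ (1 - s) * ∫⁻ x, ‖f x‖ₑ ^ s ∂μ := by
  have hs' : 0 ≤ 1 - s := sub_nonneg.2 hs
  rw [← lintegral_const_mul' _ _ (ENNReal.rpow_ne_top_of_nonneg hs' hf)]
  refine lintegral_mono_ae ?_
  filter_upwards [ae_le_eLpNormEssSup (f := f)] with x hx
  calc ‖f x‖ₑ = ‖f x‖ₑ ^ (1 - s) * ‖f x‖ₑ ^ s := by
        rw [← ENNReal.rpow_add_of_nonneg _ _ hs' hs₀, sub_add_cancel, ENNReal.rpow_one]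
    _ ≤ eLpNorm f ∞ μ ^ (1 - s) * ‖f x‖ₑ ^ s := by rw [eLpNorm_exponent_top]; gcongr

lemma eLpNorm_top_le_rpow_mul_eLpNorm_of_le_one (hp₀ : p ≠ 0) (hp : p ≤ 1)
    (hf : eLpNorm f ∞ μ ≠ ∞) {K : ℝ≥0∞} (hK : eLpNorm f ∞ μ ≤ K * ∫⁻ x, ‖f x‖ₑ ∂μ) :
    eLpNorm f ∞ μ ≤ K ^ (p⁻¹).toReal * eLpNorm f p μ := by
  have hp_top : p ≠ ∞ := ne_top_of_le_ne_top ENNReal.one_ne_top hp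
  have hp_pos : 0 < p.toReal := ENNReal.toReal_pos hp₀ hp_top
  have hp_le : p.toReal ≤ 1 := ENNReal.toReal_mono ENNReal.one_ne_top hp
  set S := eLpNorm f ∞ μ
  obtain hS | hS := eq_or_ne S 0
  · simp [hS]
  have rpow_le : S ^ p.toReal ≤ K * ∫⁻ x, ‖f x‖ₑ ^ p.toReal ∂μ := by
    refine (ENNReal.mul_le_mul_iff_right (ENNReal.rpow_pos (pos_iff_ne_zero.2 hS) hf).ne'
      (ENNReal.rpow_ne_top_of_nonneg (sub_nonneg.2 hp_le) hf)).1 ?_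
    calc S ^ (1 - p.toReal) * S ^ p.toReal = S := by
          rw [← ENNReal.rpow_add _ _ hS hf, sub_add_cancel, ENNReal.rpow_one]
      _ ≤ K * ∫⁻ x, ‖f x‖ₑ ∂μ := hK
      _ ≤ K * (S ^ (1 - p.toReal) * ∫⁻ x, ‖f x‖ₑ ^ p.toReal ∂μ) := by
          gcongr; exact lintegral_enorm_le_eLpNorm_top_rpow_mul hp_pos.le hp_le hf
      _ = S ^ (1 - p.toReal) * (K * ∫⁻ x, ‖f x‖ₑ ^ p.toReal ∂μ) := mul_left_comm _ _ _
  rw [eLpNorm_eq_lintegral_rpow_enorm_toReal hp₀ hp_top, ENNReal.toReal_inv, one_div,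
    ← ENNReal.mul_rpow_of_nonneg _ _ (by positivity), ENNReal.le_rpow_inv_iff hp_pos]
  exact rpow_le

lemma eLpNorm_top_le_rpow_mul_eLpNorm_of_le_laverage [IsFiniteMeasure μ] (hp : p ≠ 0)
    (hf : MemLp f ∞ μ) {C : ℝ≥0} (hC : eLpNorm f ∞ μ ≤ C * ⨍⁻ x, ‖f x‖ₑ ∂μ) :
    eLpNorm f ∞ μ ≤
      C ^ max 1 (p⁻¹).toReal * (μ Set.univ ^ (-(p⁻¹).toReal) * eLpNorm f p μ) := by
  obtain hp_one | hp_one := le_total 1 p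
  · have inv_le_one : (p⁻¹).toReal ≤ 1 :=
      ENNReal.toReal_mono ENNReal.one_ne_top (ENNReal.inv_le_one.2 hp_one)
    rw [max_eq_left inv_le_one, ENNReal.rpow_one]
    exact hC.trans (by gcongr; exact laverage_enorm_le_rpow_mul_eLpNorm hp_one hf.1)
  · have one_le_inv : 1 ≤ (p⁻¹).toReal :=
      ENNReal.toReal_mono (ENNReal.inv_ne_top.2 hp) (ENNReal.one_le_inv.2 hp_one)
    rw [laverage_eq, div_eq_mul_inv, mul_comm (∫⁻ x, ‖f x‖ₑ ∂μ), ← mul_assoc] at hC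
    refine (eLpNorm_top_le_rpow_mul_eLpNorm_of_le_one hp hp_one hf.2.ne hC).trans_eq ?_
    rw [max_eq_right one_le_inv, ENNReal.mul_rpow_of_nonneg _ _ (by positivity),
      ENNReal.inv_rpow, ENNReal.rpow_neg, mul_assoc]

lemma memLp_top_restrict_of_continuous_of_isBounded {X : Type*} [PseudoMetricSpace X]
    [ProperSpace X] [MeasurableSpace X] [OpensMeasurableSpace X] {ν : Measure X} {g : X → E}
    (hg : Continuous g) {U : Set X} (hU : Bornology.IsBounded U) :
    MemLp g ∞ (ν.restrict U) := by
  obtain ⟨C, hC⟩ := hU.isCompact_closure.exists_bound_of_continuousOn hg.continuousOn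
  exact memLp_top_of_bound hg.aestronglyMeasurable C
    (ae_restrict_of_ae_restrict_of_subset subset_closure
      (ae_restrict_of_forall_mem isClosed_closure.measurableSet hC))

end LpAverages

section FiniteDimensional

lemma exists_enorm_apply_le_of_forall_apply_eq_zero {𝕜 V F G : Type*} [NontriviallyNormedField 𝕜]
    [CompleteSpace 𝕜] [AddCommGroup V] [Module 𝕜 V] [FiniteDimensional 𝕜 V]
    [NormedAddCommGroup F] [NormedSpace 𝕜 F] [NormedAddCommGroup G] [NormedSpace 𝕜 G]
    (A : V →ₗ[𝕜] F) (L : V →ₗ[𝕜] G) (h : ∀ v, A v = 0 → L v = 0) :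
    ∃ C : ℝ≥0, ∀ v, ‖L v‖ₑ ≤ C * ‖A v‖ₑ := by
  obtain ⟨σ, hσ⟩ := A.rangeRestrict.exists_rightInverse_of_surjective A.range_rangeRestrict
  let g : A.range →L[𝕜] G := (L ∘ₗ σ).toContinuousLinearMap
  have g_rangeRestrict (v : V) : g (A.rangeRestrict v) = L v := by
    have A_section : A (σ (A.rangeRestrict v)) = A v :=
      congrArg Subtype.val (LinearMap.congr_fun hσ (A.rangeRestrict v))
    refine sub_eq_zero.1 ((map_sub L _ _).symm.trans (h _ ?_))
    rw [map_sub, A_section, sub_self]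
  exact ⟨‖g‖₊, fun v => g_rangeRestrict v ▸ g.le_opENorm (A.rangeRestrict v)⟩

end FiniteDimensional

section IteratedDerivatives

variable {𝕜 E F : Type*} [NontriviallyNormedField 𝕜] [NormedAddCommGroup E] [NormedSpace 𝕜 E]
  [NormedAddCommGroup F] [NormedSpace 𝕜 F]

lemma iteratedFDeriv_eq_zero_of_le {f : E → F} {r m : ℕ} (hrm : r ≤ m)
    (hf : iteratedFDeriv 𝕜 r f = 0) : iteratedFDeriv 𝕜 m f = 0 := by
  induction m, hrm using Nat.le_induction with
  | base => exact hf
  | succ n _ ih =>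
    ext x
    simp [iteratedFDeriv_succ_eq_comp_left, ih]

lemma iteratedFDeriv_comp_add_smul {f : E → F} {m : ℕ} (hf : ContDiff 𝕜 m f) (x y : E) (h : 𝕜) :
    iteratedFDeriv 𝕜 m (fun z => f (x + h • z)) y = h ^ m • iteratedFDeriv 𝕜 m f (x + h • y) := by
  have hf' : ContDiff 𝕜 m (fun z => f (x + z)) := hf.comp (contDiff_const.add contDiff_id)
  simp only [iteratedFDeriv_comp_const_smul h hf', iteratedFDeriv_comp_add_left]

lemma enorm_iteratedFDeriv_comp_add_smul {E F : Type*} [NormedAddCommGroup E] [NormedSpace ℝ E]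
    [NormedAddCommGroup F] [NormedSpace ℝ F] {f : E → F} {m : ℕ} (hf : ContDiff ℝ m f) (x y : E)
    {h : ℝ} (hh : 0 ≤ h) :
    ‖iteratedFDeriv ℝ m (fun z => f (x + h • z)) y‖ₑ =
      ENNReal.ofReal (h ^ m) * ‖iteratedFDeriv ℝ m f (x + h • y)‖ₑ := by
  rw [iteratedFDeriv_comp_add_smul hf, enorm_smul, Real.enorm_of_nonneg (by positivity)]

/-- The `m`-th derivatives of the members of a space `V` of `C^m` functions, as continuous
functions on `K`. -/
def iteratedFDerivOn (V : Submodule 𝕜 (E → F)) (m : ℕ) (hV : ∀ v ∈ V, ContDiff 𝕜 m v)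
    (K : Set E) : V →ₗ[𝕜] C(K, E [×m]→L[𝕜] F) where
  toFun v := ⟨fun x => iteratedFDeriv 𝕜 m v.1 x,
    ((hV v v.2).continuous_iteratedFDeriv').comp continuous_subtype_val⟩
  map_add' v w := by
    ext1 x
    exact iteratedFDeriv_add_apply (hV v v.2).contDiffAt (hV w w.2).contDiffAt
  map_smul' c v := by
    ext1 x
    exact iteratedFDeriv_const_smul_apply (hV v v.2).contDiffAt

end IteratedDerivatives

section AnalyticSpaces

variable {E F : Type*} [NormedAddCommGroup E] [NormedSpace ℝ E] [MeasurableSpace E] [BorelSpace E]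
  [NormedAddCommGroup F] [NormedSpace ℝ F] {μ : Measure E}

lemma iteratedFDeriv_eq_zero_of_setLIntegral_eq_zero [μ.IsOpenPosMeasure] {f : E → F}
    (hf : AnalyticOnNhd ℝ f Set.univ) {B : Set E} (hB : (interior B).Nonempty) {r m : ℕ}
    (hrm : r ≤ m) (h : ∫⁻ y in B, ‖iteratedFDeriv ℝ r f y‖ₑ ∂μ = 0) :
    iteratedFDeriv ℝ m f = 0 := by
  have continuous_deriv : Continuous (iteratedFDeriv ℝ r f) :=
    hf.contDiff.continuous_iteratedFDeriv'
  have ae_zero : iteratedFDeriv ℝ r f =ᵐ[μ.restrict B] 0 :=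
    ((lintegral_eq_zero_iff continuous_deriv.enorm.measurable).1 h).mono
      fun y (hy : ‖iteratedFDeriv ℝ r f y‖ₑ = 0) => by
        rwa [← ofReal_norm, ENNReal.ofReal_eq_zero, norm_le_zero_iff] at hy
  have eqOn_zero : Set.EqOn (iteratedFDeriv ℝ r f) 0 (interior B) :=
    Measure.eqOn_open_of_ae_eq (ae_restrict_of_ae_restrict_of_subset interior_subset ae_zero)
      isOpen_interior continuous_deriv.continuousOn continuousOn_const
  obtain ⟨x, hx⟩ := hB
  exact iteratedFDeriv_eq_zero_of_le hrm <|
    (hf.iteratedFDeriv_of_isOpen isOpen_univ r).eq_of_eventuallyEq (fun _ _ => analyticAt_const)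
      (eqOn_zero.eventuallyEq_of_mem (isOpen_interior.mem_nhds hx))

lemma exists_enorm_iteratedFDeriv_le_setLIntegral [IsFiniteMeasureOnCompacts μ]
    [μ.IsOpenPosMeasure] (V : Submodule ℝ (E → F)) [FiniteDimensional ℝ V]
    (hV : ∀ v ∈ V, AnalyticOnNhd ℝ v Set.univ) {r m : ℕ} (hrm : r ≤ m) {K B : Set E}
    (hK : IsCompact K) (hB : IsCompact B) (hB' : (interior B).Nonempty) :
    ∃ C : ℝ≥0, ∀ v ∈ V, ∀ x ∈ K,
      ‖iteratedFDeriv ℝ m v x‖ₑ ≤ C * ∫⁻ y in B, ‖iteratedFDeriv ℝ r v y‖ₑ ∂μ := by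
  have : CompactSpace K := isCompact_iff_compactSpace.1 hK
  have : CompactSpace B := isCompact_iff_compactSpace.1 hB
  have : IsFiniteMeasure (μ.comap ((↑) : B → E)) :=
    ⟨by simpa [comap_subtype_coe_apply hB.measurableSet] using hB.measure_lt_top⟩
  let A := (ContinuousMap.toLp 1 (μ.comap ((↑) : B → E)) ℝ).toLinearMap ∘ₗ
    iteratedFDerivOn V r (fun v hv => (hV v hv).contDiff) B
  let L := iteratedFDerivOn V m (fun v hv => (hV v hv).contDiff) K
  have enorm_A (v : V) : ‖A v‖ₑ = ∫⁻ y in B, ‖iteratedFDeriv ℝ r v.1 y‖ₑ ∂μ := by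
    rw [Lp.enorm_def, ← lintegral_subtype_comap hB.measurableSet]
    exact (eLpNorm_congr_ae (ContinuousMap.coeFn_toLp ..)).trans eLpNorm_one_eq_lintegral_enorm
  have eq_zero_of_apply_eq_zero (v : V) (hv : A v = 0) : L v = 0 := by
    have lintegral_zero : ∫⁻ y in B, ‖iteratedFDeriv ℝ r v.1 y‖ₑ ∂μ = 0 := by
      rw [← enorm_A, hv, enorm_zero]
    have deriv_zero :=
      iteratedFDeriv_eq_zero_of_setLIntegral_eq_zero (hV v v.2) hB' hrm lintegral_zero
    exact ContinuousMap.ext fun x => congrFun deriv_zero x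
  obtain ⟨C, hC⟩ := exists_enorm_apply_le_of_forall_apply_eq_zero
    (G := C(K, E [×m]→L[ℝ] F)) A L eq_zero_of_apply_eq_zero
  refine ⟨C, fun v hv x hx => ?_⟩
  calc ‖iteratedFDeriv ℝ m v x‖ₑ ≤ ‖L ⟨v, hv⟩‖ₑ := by
        rw [enorm_le_iff_norm_le]
        exact (L ⟨v, hv⟩).norm_coe_le_norm ⟨x, hx⟩
    _ ≤ C * ‖A ⟨v, hv⟩‖ₑ := hC _
    _ = C * ∫⁻ y in B, ‖iteratedFDeriv ℝ r v y‖ₑ ∂μ := by rw [enorm_A]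

end AnalyticSpaces

section DilationInvariantSpaces

lemma image_add_smul_closedBall {E : Type*} [SeminormedAddCommGroup E] [NormedSpace ℝ E] (x z : E)
    {h : ℝ} (hh : 0 < h) (δ : ℝ) :
    (fun y => x + h • y) '' closedBall z δ = closedBall (x + h • z) (h * δ) := by
  rw [← Set.image_image (x + ·) (h • ·), Set.image_smul, smul_closedBall' hh.ne',
    Real.norm_of_nonneg hh.le, ← vadd_eq_add, ← vadd_closedBall]
  rfl

variable {E F : Type*} [NormedAddCommGroup E] [NormedSpace ℝ E] [FiniteDimensional ℝ E]
  [MeasurableSpace E] [BorelSpace E] [NormedAddCommGroup F] [NormedSpace ℝ F] {μ : Measure E}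

lemma setLAverage_closedBall_comp_add_smul [μ.IsAddHaarMeasure] (x z : E) {h : ℝ} (hh : 0 < h)
    (δ : ℝ) (f : E → ℝ≥0∞) :
    ⨍⁻ y in closedBall z δ, f (x + h • y) ∂μ = ⨍⁻ y in closedBall (x + h • z) (h * δ), f y ∂μ := by
  have map_eq : μ.map (fun y => x + h • y) = ENNReal.ofReal |(h ^ Module.finrank ℝ E)⁻¹| • μ := by
    rw [← Function.comp_def (x + ·) (h • ·),
      ← Measure.map_map (measurable_const_add x) (measurable_const_smul h),
      Measure.map_addHaar_smul μ hh.ne', Measure.map_smul, map_add_left_eq_self]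
  rw [← image_add_smul_closedBall x z hh δ]
  exact setLAverage_comp_of_map_eq_smul
    ((measurableEmbedding_addLeft x).comp (measurableEmbedding_const_smul₀ hh.ne'))
    (by positivity) ENNReal.ofReal_ne_top map_eq _ f

lemma setLIntegral_enorm_iteratedFDeriv_comp_add_smul [μ.IsAddHaarMeasure] {f : E → F} {r : ℕ}
    (hf : ContDiff ℝ r f) (x : E) {h : ℝ} (hh : 0 < h) (δ : ℝ) :
    ∫⁻ y in closedBall 0 δ, ‖iteratedFDeriv ℝ r (fun z => f (x + h • z)) y‖ₑ ∂μ =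
      ENNReal.ofReal (h ^ r) * (μ (closedBall 0 δ) *
        ⨍⁻ y in closedBall x (δ * h), ‖iteratedFDeriv ℝ r f y‖ₑ ∂μ) := by
  have average_comp := setLAverage_closedBall_comp_add_smul (μ := μ) x 0 hh δ
    (fun y => ‖iteratedFDeriv ℝ r f y‖ₑ)
  rw [smul_zero, add_zero, mul_comm h δ] at average_comp
  simp only [enorm_iteratedFDeriv_comp_add_smul hf x _ hh.le]
  rw [lintegral_const_mul' _ _ ENNReal.ofReal_ne_top, ← average_comp,
    measure_mul_setLAverage _ measure_closedBall_lt_top.ne]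

/-- The space `V` of functions is stable under precomposition with the translations and the
dilations of positive ratio. -/
def IsDilationInvariant (V : Submodule ℝ (E → F)) : Prop :=
  ∀ v ∈ V, ∀ (x : E) (h : ℝ), 0 < h → (fun y => v (x + h • y)) ∈ V

lemma exists_enorm_iteratedFDeriv_le_setLAverage [μ.IsAddHaarMeasure] (V : Submodule ℝ (E → F))
    [FiniteDimensional ℝ V] (hV : ∀ v ∈ V, AnalyticOnNhd ℝ v Set.univ)
    (hV_dil : IsDilationInvariant V) {δ : ℝ} (hδ : 0 < δ) {r m : ℕ} (hrm : r ≤ m) :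
    ∃ C : ℝ≥0, ∀ v ∈ V, ∀ (x₀ : E) (h : ℝ), 0 < h → ∀ x ∈ closedBall x₀ h,
      ‖iteratedFDeriv ℝ m v x‖ₑ ≤ C * ENNReal.ofReal (h ^ ((r : ℝ) - m)) *
        ⨍⁻ y in closedBall x₀ (δ * h), ‖iteratedFDeriv ℝ r v y‖ₑ ∂μ := by
  obtain ⟨C, hC⟩ := exists_enorm_iteratedFDeriv_le_setLIntegral (μ := μ) V hV hrm
    (isCompact_closedBall (0 : E) 1) (isCompact_closedBall 0 δ)
    ⟨0, ball_subset_interior_closedBall (mem_ball_self hδ)⟩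
  have measure_ball_ne_top : μ (closedBall 0 δ) ≠ ∞ := measure_closedBall_lt_top.ne
  refine ⟨C * (μ (closedBall 0 δ)).toNNReal, fun v hv x₀ h hh x hx => ?_⟩
  obtain ⟨z, hz, rfl⟩ : ∃ z ∈ closedBall (0 : E) 1, x₀ + h • z = x := by
    rwa [← mul_one h, ← add_zero x₀, ← smul_zero h, ← image_add_smul_closedBall x₀ 0 hh 1] at hx
  have ofReal_rpow : ENNReal.ofReal (h ^ m) * ENNReal.ofReal (h ^ ((r : ℝ) - m)) =
      ENNReal.ofReal (h ^ r) := by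
    rw [← ENNReal.ofReal_mul (by positivity), ← Real.rpow_natCast, ← Real.rpow_natCast,
      ← Real.rpow_add hh, add_sub_cancel]
  refine (ENNReal.mul_le_mul_iff_right (ENNReal.ofReal_pos.2 (pow_pos hh m)).ne'
    ENNReal.ofReal_ne_top).1 ?_
  calc ENNReal.ofReal (h ^ m) * ‖iteratedFDeriv ℝ m v (x₀ + h • z)‖ₑ
      = ‖iteratedFDeriv ℝ m (fun z => v (x₀ + h • z)) z‖ₑ :=
        (enorm_iteratedFDeriv_comp_add_smul (hV v hv).contDiff x₀ z hh.le).symm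
    _ ≤ C * ∫⁻ y in closedBall 0 δ, ‖iteratedFDeriv ℝ r (fun z => v (x₀ + h • z)) y‖ₑ ∂μ :=
        hC _ (hV_dil v hv x₀ h hh) z hz
    _ = C * (ENNReal.ofReal (h ^ r) * (μ (closedBall 0 δ) *
          ⨍⁻ y in closedBall x₀ (δ * h), ‖iteratedFDeriv ℝ r v y‖ₑ ∂μ)) := by
        rw [setLIntegral_enorm_iteratedFDeriv_comp_add_smul (hV v hv).contDiff x₀ hh]
    _ = _ := by
        rw [ENNReal.coe_mul, ENNReal.coe_toNNReal measure_ball_ne_top, ← ofReal_rpow]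
        ring

/-- The `δ`-ball condition: `U` contains a closed ball of radius `δ` times its diameter. -/
def BallCondition (δ : ℝ) (U : Set E) : Prop :=
  ∃ x, closedBall x (δ * diam U) ⊆ U

lemma exists_eLpNorm_top_iteratedFDeriv_le_setLAverage [μ.IsAddHaarMeasure]
    (V : Submodule ℝ (E → F)) [FiniteDimensional ℝ V]
    (hV : ∀ v ∈ V, AnalyticOnNhd ℝ v Set.univ) (hV_dil : IsDilationInvariant V) {δ : ℝ} (hδ : 0 < δ)
    {r m : ℕ} (hrm : r ≤ m) :
    ∃ C : ℝ≥0, ∀ U : Set E, Bornology.IsBounded U → 0 < diam U → BallCondition δ U → ∀ v ∈ V,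
      eLpNorm (iteratedFDeriv ℝ m v) ∞ (μ.restrict U) ≤
        C * ENNReal.ofReal (diam U ^ ((r : ℝ) - m)) *
          ⨍⁻ y in U, ‖iteratedFDeriv ℝ r v y‖ₑ ∂μ := by
  obtain ⟨C, hC⟩ := exists_enorm_iteratedFDeriv_le_setLAverage (μ := μ) V hV hV_dil hδ hrm
  let c : ℝ≥0 := (δ⁻¹ ^ Module.finrank ℝ E).toNNReal
  refine ⟨C * c, fun U hU hdiam ⟨x₀, hx₀⟩ v hv => ?_⟩
  have U_subset : U ⊆ closedBall x₀ (diam U) := fun x hx =>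
    dist_le_diam_of_mem hU hx (hx₀ (mem_closedBall_self (by positivity)))
  have measure_le : μ U ≤ c * μ (closedBall x₀ (δ * diam U)) :=
    calc μ U ≤ μ (closedBall x₀ (δ⁻¹ * (δ * diam U))) := by
          rw [inv_mul_cancel_left₀ hδ.ne']; exact measure_mono U_subset
      _ = c * μ (closedBall x₀ (δ * diam U)) := by
          rw [Measure.addHaar_closedBall_mul μ _ (by positivity) (by positivity),
            ← Measure.addHaar_closedBall_center μ x₀]
          rfl
  rw [eLpNorm_exponent_top]
  refine eLpNormEssSup_le_of_ae_enorm_bound (ae_restrict_of_ae_restrict_of_subset U_subset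
    (ae_restrict_of_forall_mem measurableSet_closedBall fun x hx => ?_))
  calc ‖iteratedFDeriv ℝ m v x‖ₑ
      ≤ C * ENNReal.ofReal (diam U ^ ((r : ℝ) - m)) *
          ⨍⁻ y in closedBall x₀ (δ * diam U), ‖iteratedFDeriv ℝ r v y‖ₑ ∂μ :=
        hC v hv x₀ _ hdiam x hx
    _ ≤ C * ENNReal.ofReal (diam U ^ ((r : ℝ) - m)) *
          (c * ⨍⁻ y in U, ‖iteratedFDeriv ℝ r v y‖ₑ ∂μ) := by
        gcongr; exact setLAverage_le_mul_setLAverage hx₀ measure_le _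
    _ = _ := by rw [ENNReal.coe_mul]; ring

lemma exists_eLpNorm_top_iteratedFDeriv_le_rpow_mul_eLpNorm [μ.IsAddHaarMeasure]
    (V : Submodule ℝ (E → F)) [FiniteDimensional ℝ V]
    (hV : ∀ v ∈ V, AnalyticOnNhd ℝ v Set.univ) (hV_dil : IsDilationInvariant V) {δ : ℝ} (hδ : 0 < δ)
    {q : ℝ≥0∞} (hq : q ≠ 0) {r m : ℕ} (hrm : r ≤ m) :
    ∃ C : ℝ≥0, ∀ U : Set E, Bornology.IsBounded U → 0 < diam U → BallCondition δ U → ∀ v ∈ V,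
      eLpNorm (iteratedFDeriv ℝ m v) ∞ (μ.restrict U) ≤
        C * ENNReal.ofReal (diam U ^ ((r : ℝ) - m)) *
          (μ U ^ (-(q⁻¹).toReal) * eLpNorm (iteratedFDeriv ℝ r v) q (μ.restrict U)) := by
  obtain ⟨C₁, hC₁⟩ := exists_eLpNorm_top_iteratedFDeriv_le_setLAverage (μ := μ) V hV hV_dil hδ hrm
  obtain ⟨C₂, hC₂⟩ :=
    exists_eLpNorm_top_iteratedFDeriv_le_setLAverage (μ := μ) V hV hV_dil hδ (le_refl r)
  refine ⟨C₁ * C₂ ^ max 1 (q⁻¹).toReal, fun U hU hdiam hball v hv => ?_⟩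
  have : IsFiniteMeasure (μ.restrict U) := ⟨by simpa using hU.measure_lt_top⟩
  have memLp_top : MemLp (iteratedFDeriv ℝ r v) ∞ (μ.restrict U) :=
    memLp_top_restrict_of_continuous_of_isBounded (hV v hv).contDiff.continuous_iteratedFDeriv' hU
  have sup_le_laverage : eLpNorm (iteratedFDeriv ℝ r v) ∞ (μ.restrict U) ≤
      C₂ * ⨍⁻ y in U, ‖iteratedFDeriv ℝ r v y‖ₑ ∂μ := by
    simpa only [sub_self, Real.rpow_zero, ENNReal.ofReal_one, mul_one] using
      hC₂ U hU hdiam hball v hv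
  calc eLpNorm (iteratedFDeriv ℝ m v) ∞ (μ.restrict U)
      ≤ C₁ * ENNReal.ofReal (diam U ^ ((r : ℝ) - m)) *
          ⨍⁻ y in U, ‖iteratedFDeriv ℝ r v y‖ₑ ∂μ := hC₁ U hU hdiam hball v hv
    _ ≤ C₁ * ENNReal.ofReal (diam U ^ ((r : ℝ) - m)) *
          eLpNorm (iteratedFDeriv ℝ r v) ∞ (μ.restrict U) := by
        gcongr
        rw [eLpNorm_exponent_top, eLpNormEssSup_eq_essSup_enorm]
        exact laverage_le_essSup _
    _ ≤ C₁ * ENNReal.ofReal (diam U ^ ((r : ℝ) - m)) * (C₂ ^ max 1 (q⁻¹).toReal *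
          (μ U ^ (-(q⁻¹).toReal) * eLpNorm (iteratedFDeriv ℝ r v) q (μ.restrict U))) := by
        gcongr
        simpa only [Measure.restrict_apply_univ] using
          eLpNorm_top_le_rpow_mul_eLpNorm_of_le_laverage hq memLp_top sup_le_laverage
    _ = _ := by
        rw [ENNReal.coe_mul, ENNReal.coe_rpow_of_nonneg _ (by positivity)]
        ring

theorem reverse_sobolev_embeddings_general [μ.IsAddHaarMeasure]
    (V : Submodule ℝ (E → F)) [FiniteDimensional ℝ V]
    (hV : ∀ v ∈ V, AnalyticOnNhd ℝ v Set.univ) (hV_dil : IsDilationInvariant V) {δ : ℝ} (hδ : 0 < δ)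
    {p q : ℝ≥0∞} (_hp : p ≠ 0) (hq : q ≠ 0) {r m : ℕ} (hrm : r ≤ m) :
    ∃ M : ℝ, 0 < M ∧ ∀ U : Set E, Bornology.IsBounded U → 0 < diam U → BallCondition δ U →
      ∀ v ∈ V, eLpNorm (iteratedFDeriv ℝ m v) p (μ.restrict U) ≤
        ENNReal.ofReal (M * diam U ^ ((r : ℝ) - m)) * μ U ^ ((p⁻¹).toReal - (q⁻¹).toReal) *
          eLpNorm (iteratedFDeriv ℝ r v) q (μ.restrict U) := by
  obtain ⟨C, hC⟩ :=
    exists_eLpNorm_top_iteratedFDeriv_le_rpow_mul_eLpNorm (μ := μ) V hV hV_dil hδ hq hrm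
  refine ⟨C + 1, by positivity, fun U hU hdiam hball v hv => ?_⟩
  have measure_ne_zero : μ U ≠ 0 := by
    obtain ⟨x, hx⟩ := hball
    exact ((measure_closedBall_pos μ x (by positivity)).trans_le (measure_mono hx)).ne'
  have coe_mul_le : C * ENNReal.ofReal (diam U ^ ((r : ℝ) - m)) ≤
      ENNReal.ofReal ((C + 1) * diam U ^ ((r : ℝ) - m)) := by
    rw [ENNReal.ofReal_mul (by positivity), ← ENNReal.ofReal_coe_nnreal]
    gcongr
    exact le_add_of_nonneg_right zero_le_one
  have aestronglyMeasurable : AEStronglyMeasurable (iteratedFDeriv ℝ m v) (μ.restrict U) :=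
    (hV v hv).contDiff.continuous_iteratedFDeriv'.aestronglyMeasurable
  calc eLpNorm (iteratedFDeriv ℝ m v) p (μ.restrict U)
      ≤ eLpNorm (iteratedFDeriv ℝ m v) ∞ (μ.restrict U) * μ U ^ (p⁻¹).toReal := by
        simpa [ENNReal.toReal_inv] using
          eLpNorm_le_eLpNorm_mul_rpow_measure_univ (le_top : p ≤ ∞) aestronglyMeasurable
    _ ≤ ENNReal.ofReal ((C + 1) * diam U ^ ((r : ℝ) - m)) *
          (μ U ^ (-(q⁻¹).toReal) * eLpNorm (iteratedFDeriv ℝ r v) q (μ.restrict U)) *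
          μ U ^ (p⁻¹).toReal := by
        gcongr; exact (hC U hU hdiam hball v hv).trans (by gcongr)
    _ = _ := by
        rw [sub_eq_add_neg (p⁻¹).toReal, ENNReal.rpow_add _ _ measure_ne_zero hU.measure_lt_top.ne]
        ring

end DilationInvariantSpaces

section Polynomials

lemma totalDegree_bind₁_le {σ τ R : Type*} [CommSemiring R] {f : σ → MvPolynomial τ R} {d : ℕ}
    (hf : ∀ i, (f i).totalDegree ≤ d) (P : MvPolynomial σ R) :
    (MvPolynomial.bind₁ f P).totalDegree ≤ P.totalDegree * d := by
  conv_lhs => rw [P.as_sum, map_sum]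
  refine MvPolynomial.totalDegree_finsetSum_le fun s hs => ?_
  rw [MvPolynomial.bind₁_monomial]
  calc (MvPolynomial.C (P.coeff s) * ∏ i ∈ s.support, f i ^ s i).totalDegree
      ≤ (MvPolynomial.C (P.coeff s)).totalDegree + (∏ i ∈ s.support, f i ^ s i).totalDegree :=
        MvPolynomial.totalDegree_mul _ _
    _ ≤ ∑ i ∈ s.support, (f i ^ s i).totalDegree := by
        rw [MvPolynomial.totalDegree_C, zero_add]
        exact MvPolynomial.totalDegree_finsetProd _ _
    _ ≤ ∑ i ∈ s.support, s i * d := by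
        gcongr with i
        exact (MvPolynomial.totalDegree_pow _ _).trans (Nat.mul_le_mul_left _ (hf i))
    _ ≤ P.totalDegree * d := by
        rw [← Finset.sum_mul]
        exact Nat.mul_le_mul_right _ (MvPolynomial.le_totalDegree hs)

/-- The functions `IsPolyDegLE N k`, as the image of the polynomials of total degree at most `k`
under evaluation. -/
def polyDegLE (N k : ℕ) : Submodule ℝ (EuclideanSpace ℝ (Fin N) → ℝ) :=
  (MvPolynomial.restrictTotalDegree (Fin N) ℝ k).map
    (MvPolynomial.aeval fun i (x : EuclideanSpace ℝ (Fin N)) => x i).toLinearMap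

variable {N k : ℕ} {w : EuclideanSpace ℝ (Fin N) → ℝ}

instance : FiniteDimensional ℝ (polyDegLE N k) := by
  unfold polyDegLE; infer_instance

lemma mem_polyDegLE : w ∈ polyDegLE N k ↔ IsPolyDegLE N k w := by
  have aeval_apply (P : MvPolynomial (Fin N) ℝ) (x : EuclideanSpace ℝ (Fin N)) :
      MvPolynomial.aeval (fun i (x : EuclideanSpace ℝ (Fin N)) => x i) P x =
        MvPolynomial.eval (fun i => x i) P := by
    rw [← MvPolynomial.aeval_eq_eval]
    exact DFunLike.congr_fun (MvPolynomial.comp_aeval _ (Pi.evalAlgHom ℝ (fun _ => ℝ) x)) P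
  simp [polyDegLE, IsPolyDegLE, MvPolynomial.mem_restrictTotalDegree, funext_iff, aeval_apply,
    eq_comm]

lemma IsPolyDegLE.analyticOnNhd (hw : IsPolyDegLE N k w) : AnalyticOnNhd ℝ w Set.univ := by
  obtain ⟨P, -, hP⟩ := hw
  have analyticOnNhd_aeval := AnalyticOnNhd.aeval_mvPolynomial (𝕜 := ℝ) (s := Set.univ)
    (f := fun (x : EuclideanSpace ℝ (Fin N)) i => x i)
    (fun i => (EuclideanSpace.proj i : _ →L[ℝ] ℝ).analyticOnNhd _) P
  simpa [MvPolynomial.aeval_eq_eval, ← hP] using analyticOnNhd_aeval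

lemma IsPolyDegLE.comp_add_smul (hw : IsPolyDegLE N k w) (x : EuclideanSpace ℝ (Fin N)) (h : ℝ) :
    IsPolyDegLE N k fun y => w (x + h • y) := by
  obtain ⟨P, hPk, hP⟩ := hw
  let f (i : Fin N) : MvPolynomial (Fin N) ℝ :=
    MvPolynomial.C (x i) + MvPolynomial.C h * MvPolynomial.X i
  have totalDegree_le_one (i : Fin N) : (f i).totalDegree ≤ 1 := by
    refine (MvPolynomial.totalDegree_add _ _).trans (max_le (by simp) ?_)
    exact (MvPolynomial.totalDegree_mul _ _).trans (by simp)
  refine ⟨MvPolynomial.bind₁ f P, ?_, fun y => ?_⟩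
  · exact (totalDegree_bind₁_le totalDegree_le_one P).trans (by rwa [mul_one])
  · simp only [hP, MvPolynomial.eval, MvPolynomial.eval₂Hom_bind₁]
    congr 2
    ext i
    simp [f]

end Polynomials

/-- Reverse Sobolev embeddings on local polynomial spaces:
`|w|_{W^{m,p}(U)} ≤ M h_U^{r-m} |U|^{1/p-1/q} |w|_{W^{r,q}(U)}` for `m ≥ r`. -/
theorem reverse_sobolev_embeddings
    (N k : ℕ) (hN : 1 ≤ N) (δ : ℝ) (hδ : 0 < δ) (p q : ℝ≥0∞) (hp : 1 ≤ p) (hq : 1 ≤ q)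
    (m r : ℕ) (hrm : r ≤ m) :
    ∃ M : ℝ, 0 < M ∧
      ∀ U : Set (EuclideanSpace ℝ (Fin N)),
        IsOpen U → Bornology.IsBounded U → 0 < volume U → 0 < Metric.diam U →
        (∃ x, Metric.closedBall x (δ * Metric.diam U) ⊆ U) →
        ∀ w : EuclideanSpace ℝ (Fin N) → ℝ, IsPolyDegLE N k w →
          sobSemi m p U w
            ≤ ENNReal.ofReal (M * Metric.diam U ^ ((r : ℝ) - (m : ℝ))) *
              volume U ^ ((p⁻¹).toReal - (q⁻¹).toReal) * sobSemi r q U w := by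
  obtain ⟨M, hM, H⟩ := reverse_sobolev_embeddings_general (μ := volume) (polyDegLE N k)
    (fun v hv => (mem_polyDegLE.1 hv).analyticOnNhd)
    (fun v hv x h _ => mem_polyDegLE.2 ((mem_polyDegLE.1 hv).comp_add_smul x h))
    hδ (one_pos.trans_le hp).ne' (one_pos.trans_le hq).ne' hrm
  refine ⟨M, hM, fun U _ hU _ hdiam hball w hw => ?_⟩
  simpa only [sobSemi, eLpNorm_norm] using H U hU hdiam hball w (mem_polyDegLE.2 hw)
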